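/- arXiv:2507.02540 — 5 statements merged into one kernel-verified Lean document; each statement's English description precedes it below -/
import Mathlib

section
/- The Pauli twirling channel prepares the maximally mixed state: for every natural number n and every matrix M indexed by (Fin n → Fin 2) with complex entries, d⁻² • (Σ over all s : Fin n → Fin 4 of P_s * M * P_s) = (M.trace / d) • 1, where d = 2^n. -/
open Complex Matrix BigOperators

/-- The single-qubit Pauli matrices `Q₀ = 1`, `Q₁ = X`, `Q₂ = Y`, `Q₃ = Z`. -/
noncomputable def Q : Fin 4 → Matrix (Fin 2) (Fin 2) ℂ :=
  ![1, !![0, 1; 1, 0], !![0, -Complex.I; Complex.I, 0], !![1, 0; 0, -1]]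

/-- The `n`-qubit Pauli string `P_s`, the Kronecker product of the `Q (s k)`. -/
noncomputable def P {n : ℕ} (s : Fin n → Fin 4) :
    Matrix (Fin n → Fin 2) (Fin n → Fin 2) ℂ :=
  Matrix.of fun i j => ∏ k, Q (s k) (i k) (j k)

/-!
The single-qubit identity `∑ t, Q t ⊗ Q t = 2 • SWAP` is multiplicative under Kronecker products,
so `∑ s, P s ⊗ P s = 2 ^ n • SWAP`. Contracting the inner pair of indices with `M` closes the loop
into `M.trace`, and the outer pair is left with the identity matrix.
-/

section Completeness

variable {ι m n R : Type*} [Fintype ι] [DecidableEq m] [DecidableEq n] [CommSemiring R]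

/-- The completeness (Fierz) relation `∑ s, A s ⊗ B s = w • SWAP`, written out in matrix entries.
Through `IsCompletePair.sum_mul_mul` it makes `M ↦ ∑ s, A s * M * B s` completely depolarizing. -/
def IsCompletePair (A : ι → Matrix m n R) (B : ι → Matrix n m R) (w : R) : Prop :=
  ∀ i b c j, ∑ s, A s i b * B s c j = w * ((1 : Matrix m m R) i j * (1 : Matrix n n R) b c)

theorem IsCompletePair.sum_mul_mul [Fintype n] {A : ι → Matrix m n R} {B : ι → Matrix n m R}
    {w : R} (h : IsCompletePair A B w) (M : Matrix n n R) :
    ∑ s, A s * M * B s = (w * M.trace) • (1 : Matrix m m R) := by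
  ext i j
  calc (∑ s, A s * M * B s) i j
      = ∑ s, ∑ c, ∑ b, M b c * (A s i b * B s c j) := by
        simp only [Matrix.sum_apply, Matrix.mul_apply, Finset.sum_mul, mul_assoc, mul_left_comm]
    _ = ∑ c, ∑ b, M b c * ∑ s, A s i b * B s c j := by
        simp only [Finset.mul_sum]
        rw [Finset.sum_comm]
        exact Finset.sum_congr rfl fun c _ => Finset.sum_comm
    _ = ∑ c, M c c * (w * (1 : Matrix m m R) i j) := by
        simp only [h i _ _ j, Matrix.one_apply (n := n), mul_ite, mul_one, mul_zero,
          Finset.sum_ite_eq', Finset.mem_univ, if_true]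
    _ = ((w * M.trace) • (1 : Matrix m m R)) i j := by
        rw [← Finset.sum_mul, Matrix.smul_apply, smul_eq_mul, mul_left_comm, ← mul_assoc]
        rfl

end Completeness

section KroneckerPi

variable {κ : Type*} [Fintype κ] {m n ι : κ → Type*} {R : Type*}

/-- The Kronecker product of a finite family of matrices, with rows and columns indexed by
dependent functions. -/
def kroneckerPi [CommMonoid R] (A : ∀ k, Matrix (m k) (n k) R) :
    Matrix (∀ k, m k) (∀ k, n k) R :=
  Matrix.of fun i j => ∏ k, A k (i k) (j k)

theorem kroneckerPi_apply [CommMonoid R] (A : ∀ k, Matrix (m k) (n k) R) (i : ∀ k, m k)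
    (j : ∀ k, n k) : kroneckerPi A i j = ∏ k, A k (i k) (j k) :=
  rfl

variable [∀ k, DecidableEq (m k)]

theorem kroneckerPi_one [CommMonoidWithZero R] :
    kroneckerPi (fun k => (1 : Matrix (m k) (m k) R)) = 1 := by
  ext i j
  simp only [kroneckerPi_apply, Matrix.one_apply, Finset.prod_ite_zero, Finset.prod_const_one,
    Finset.mem_univ, true_implies, funext_iff]

theorem IsCompletePair.kroneckerPi [CommSemiring R] [DecidableEq κ] [∀ k, DecidableEq (n k)]
    [∀ k, Fintype (ι k)] {A : ∀ k, ι k → Matrix (m k) (n k) R}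
    {B : ∀ k, ι k → Matrix (n k) (m k) R} {w : κ → R}
    (h : ∀ k, IsCompletePair (A k) (B k) (w k)) :
    IsCompletePair (fun s : ∀ k, ι k => kroneckerPi fun k => A k (s k))
      (fun s => kroneckerPi fun k => B k (s k)) (∏ k, w k) := by
  intro i b c j
  calc ∑ s : ∀ k, ι k, (∏ k, A k (s k) (i k) (b k)) * ∏ k, B k (s k) (c k) (j k)
      = ∏ k, ∑ t, A k t (i k) (b k) * B k t (c k) (j k) := by
        simp only [Fintype.prod_sum, Finset.prod_mul_distrib]
    _ = ∏ k, w k * ((1 : Matrix (m k) (m k) R) (i k) (j k) *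
          (1 : Matrix (n k) (n k) R) (b k) (c k)) :=
        Finset.prod_congr rfl fun k _ => h k _ _ _ _
    _ = (∏ k, w k) * ((1 : Matrix (∀ k, m k) (∀ k, m k) R) i j *
          (1 : Matrix (∀ k, n k) (∀ k, n k) R) b c) := by
        simp only [Finset.prod_mul_distrib, ← kroneckerPi_one, kroneckerPi_apply]

end KroneckerPi

theorem isCompletePair_Q : IsCompletePair Q Q 2 := by
  intro i b c j
  fin_cases i <;> fin_cases b <;> fin_cases c <;> fin_cases j <;>
    simp [Q, Fin.sum_univ_four] <;> norm_num

theorem P_eq_kroneckerPi {n : ℕ} (s : Fin n → Fin 4) : P s = kroneckerPi fun k => Q (s k) :=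
  rfl

theorem isCompletePair_P (n : ℕ) : IsCompletePair (P (n := n)) (P (n := n)) (2 ^ n) := by
  simpa only [← P_eq_kroneckerPi, Finset.prod_const, Finset.card_univ, Fintype.card_fin] using
    IsCompletePair.kroneckerPi fun _ : Fin n => isCompletePair_Q

theorem pauli_twirl (n : ℕ) (M : Matrix (Fin n → Fin 2) (Fin n → Fin 2) ℂ) :
    ((2 ^ n : ℂ) ^ 2)⁻¹ • ∑ s : Fin n → Fin 4, P s * M * P s
      = (M.trace / (2 ^ n : ℂ)) • (1 : Matrix (Fin n → Fin 2) (Fin n → Fin 2) ℂ) := by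
  rw [(isCompletePair_P n).sum_mul_mul, smul_smul]
  congr 1
  field_simp
end

section
/- The characteristic distribution of a pure state is a probability distribution: for every natural number n and every unit vector ψ : (Fin n → Fin 2) → ℂ (i.e., star ψ ⬝ᵥ ψ = 1), the sum over all s : Fin n → Fin 4 of d⁻¹ · (Re⟨ψ, P_s ψ⟩)² equals 1, where ⟨ψ, P_s ψ⟩ = star ψ ⬝ᵥ P_s.mulVec ψ and d = 2^n. (Each summand is manifestly nonnegative.) -/
/-!
The Pauli matrices satisfy `∑ₐ Qₐ i j * conj (Qₐ k l) = 2 δᵢₖ δⱼₗ`: they form a tight frame of the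
space of `2 × 2` matrices with frame constant `2`. Entries of a Kronecker product are products of
entries, so the frame condition is multiplicative and the Pauli strings form a tight frame with
constant `d = 2 ^ n`. Parseval's identity for the density matrix `ρ = |ψ⟩⟨ψ|` then reads
`∑ₛ |tr (P_s ρ)|² = d tr (ρ²) = d`, where `tr (P_s ρ) = ⟨ψ, P_s ψ⟩` is real because `P_s` is
Hermitian.
-/

open Complex Matrix BigOperators

section PiKronecker

variable {κ R : Type*} {m p : κ → Type*} [Fintype κ] [CommMonoid R]

/-- The Kronecker product of a finite family of matrices, with rows and columns indexed by
dependent functions instead of iterated pairs. -/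
def piKronecker (A : ∀ k, Matrix (m k) (p k) R) : Matrix (∀ k, m k) (∀ k, p k) R :=
  of fun i j => ∏ k, A k (i k) (j k)

theorem conjTranspose_piKronecker [StarMul R] (A : ∀ k, Matrix (m k) (p k) R) :
    (piKronecker A)ᴴ = piKronecker fun k => (A k)ᴴ := by
  ext i j
  simp only [piKronecker, conjTranspose_apply, of_apply, star_prod]

theorem isHermitian_piKronecker [StarMul R] {A : ∀ k, Matrix (m k) (m k) R}
    (hA : ∀ k, (A k).IsHermitian) : (piKronecker A).IsHermitian := by
  simp only [IsHermitian, conjTranspose_piKronecker, (hA _).eq]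

end PiKronecker

theorem isSelfAdjoint_star_dotProduct_mulVec_self {m R : Type*} [Fintype m]
    [NonUnitalSemiring R] [StarRing R] {A : Matrix m m R} (hA : A.IsHermitian) (ψ : m → R) :
    IsSelfAdjoint (star ψ ⬝ᵥ A *ᵥ ψ) := by
  rw [isSelfAdjoint_iff, ← star_dotProduct, star_mulVec, hA.eq, dotProduct_mulVec]

section TightFrame

variable {ι m p R : Type*}

/-- The matrix of the analysis operator `X ↦ (tr ((A a)ᴴ * X))ₐ` of a family of matrices, acting on
vectorized matrices `vec X`. -/
def analysisMatrix [Star R] (A : ι → Matrix m p R) : Matrix ι (p × m) R :=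
  of fun a => star (vec (A a))

variable [CommSemiring R] [StarRing R]

theorem analysisMatrix_mulVec_vec [Fintype m] [Fintype p] (A : ι → Matrix m p R)
    (X : Matrix m p R) : analysisMatrix A *ᵥ vec X = fun a => trace ((A a)ᴴ * X) :=
  funext fun a => star_vec_dotProduct_vec (A a) X

variable [Fintype ι] [DecidableEq m] [DecidableEq p]

/-- The matrices `A a` form a tight frame, with frame constant `c`, of the space of `m × p` matrices
with the Frobenius inner product: the frame operator is multiplication by `c`. -/
def IsTightFrame (A : ι → Matrix m p R) (c : R) : Prop :=
  (analysisMatrix A)ᴴ * analysisMatrix A = c • 1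

theorem isTightFrame_iff {A : ι → Matrix m p R} {c : R} :
    IsTightFrame A c ↔
      ∀ i j k l, ∑ a, A a i j * star (A a k l) = if i = k ∧ j = l then c else 0 := by
  have frameOperator_apply (i : m) (j : p) (k : m) (l : p) :
      ((analysisMatrix A)ᴴ * analysisMatrix A) (j, i) (l, k) = ∑ a, A a i j * star (A a k l) := by
    simp [analysisMatrix, mul_apply]
  have smul_one_apply (i : m) (j : p) (k : m) (l : p) :
      (c • (1 : Matrix (p × m) (p × m) R)) (j, i) (l, k) = if i = k ∧ j = l then c else 0 := by
    simp [one_apply, and_comm]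
  simp only [IsTightFrame, ← Matrix.ext_iff, Prod.forall, frameOperator_apply, smul_one_apply]
  exact ⟨fun h i j k l => h j i l k, fun h j i l k => h i j k l⟩

theorem IsTightFrame.sum_star_trace_mul_trace [Fintype m] [Fintype p] {A : ι → Matrix m p R}
    {c : R} (hA : IsTightFrame A c) (X Y : Matrix m p R) :
    ∑ a, star (trace ((A a)ᴴ * X)) * trace ((A a)ᴴ * Y) = c * trace (Xᴴ * Y) := by
  set F := analysisMatrix A with hF
  calc ∑ a, star (trace ((A a)ᴴ * X)) * trace ((A a)ᴴ * Y)
      = star (F *ᵥ vec X) ⬝ᵥ (F *ᵥ vec Y) := by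
        simp only [hF, analysisMatrix_mulVec_vec, dotProduct, Pi.star_apply]
    _ = star (vec X) ⬝ᵥ ((Fᴴ * F) *ᵥ vec Y) := by
        rw [star_mulVec, ← dotProduct_mulVec, mulVec_mulVec]
    _ = c * trace (Xᴴ * Y) := by
        rw [hA, smul_mulVec, one_mulVec, dotProduct_smul, smul_eq_mul, star_vec_dotProduct_vec]

theorem IsTightFrame.sum_star_dotProduct_mulVec_self_sq [Fintype m] {A : ι → Matrix m m R} {c : R}
    (hA : IsTightFrame A c) (hherm : ∀ a, (A a).IsHermitian) (ψ : m → R) :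
    ∑ a, (star ψ ⬝ᵥ A a *ᵥ ψ) ^ 2 = c * (star ψ ⬝ᵥ ψ) ^ 2 := by
  set ρ := vecMulVec ψ (star ψ) with hρ
  have trace_mul_ρ (B : Matrix m m R) : trace (B * ρ) = star ψ ⬝ᵥ B *ᵥ ψ := by
    rw [hρ, mul_vecMulVec, trace_vecMulVec, dotProduct_comm]
  have trace_ρ_sq : trace (ρᴴ * ρ) = (star ψ ⬝ᵥ ψ) ^ 2 := by
    rw [hρ, conjTranspose_vecMulVec, star_star, vecMulVec_mul_vecMulVec, trace_vecMulVec,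
      dotProduct_smul, dotProduct_comm ψ, smul_eq_mul, sq]
  have parseval := hA.sum_star_trace_mul_trace ρ ρ
  rw [trace_ρ_sq] at parseval
  simpa only [trace_mul_ρ, (hherm _).eq,
    (isSelfAdjoint_star_dotProduct_mulVec_self (hherm _) ψ).star_eq, ← sq] using parseval

end TightFrame

theorem isTightFrame_piKronecker {κ R : Type*} {ι m p : κ → Type*} [Fintype κ] [DecidableEq κ]
    [CommSemiring R] [StarRing R] [∀ k, Fintype (ι k)] [∀ k, DecidableEq (m k)]
    [∀ k, DecidableEq (p k)] {A : ∀ k, ι k → Matrix (m k) (p k) R} {c : κ → R}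
    (hA : ∀ k, IsTightFrame (A k) (c k)) :
    IsTightFrame (fun s : ∀ k, ι k => piKronecker fun k => A k (s k)) (∏ k, c k) := by
  rw [isTightFrame_iff]
  intro i j k l
  calc ∑ s : ∀ e, ι e, (∏ e, A e (s e) (i e) (j e)) * star (∏ e, A e (s e) (k e) (l e))
      = ∏ e, ∑ a, A e a (i e) (j e) * star (A e a (k e) (l e)) := by
        simp only [star_prod, ← Finset.prod_mul_distrib, Fintype.prod_sum]
    _ = ∏ e, if i e = k e ∧ j e = l e then c e else 0 := by
        simp only [isTightFrame_iff.mp (hA _)]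
    _ = if i = k ∧ j = l then ∏ e, c e else 0 := by
        simp only [Fintype.prod_ite_zero, forall_and, funext_iff]

theorem isHermitian_Q (a : Fin 4) : (Q a).IsHermitian := by
  ext i j
  fin_cases a <;> fin_cases i <;> fin_cases j <;> simp [Q]

theorem isTightFrame_Q : IsTightFrame Q 2 := by
  rw [isTightFrame_iff]
  intro i j k l
  fin_cases i <;> fin_cases j <;> fin_cases k <;> fin_cases l <;>
    simp [Q, Fin.sum_univ_four] <;> norm_num

theorem isHermitian_P {n : ℕ} (s : Fin n → Fin 4) : (P s).IsHermitian :=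
  isHermitian_piKronecker fun k => isHermitian_Q (s k)

theorem isTightFrame_P (n : ℕ) : IsTightFrame (P (n := n)) (2 ^ n) := by
  rw [← Fin.prod_const]
  exact isTightFrame_piKronecker fun _ => isTightFrame_Q

theorem characteristic_distribution_sums_to_one (n : ℕ) (ψ : (Fin n → Fin 2) → ℂ)
    (hψ : star ψ ⬝ᵥ ψ = 1) :
    ∑ s : Fin n → Fin 4, (2 ^ n : ℝ)⁻¹ * (star ψ ⬝ᵥ (P s).mulVec ψ).re ^ 2 = 1 := by
  have expectation_real (s : Fin n → Fin 4) :
      ((star ψ ⬝ᵥ P s *ᵥ ψ).re : ℂ) = star ψ ⬝ᵥ P s *ᵥ ψ :=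
    conj_eq_iff_re.mp (isSelfAdjoint_star_dotProduct_mulVec_self (isHermitian_P s) ψ)
  have sum_sq : ∑ s : Fin n → Fin 4, (star ψ ⬝ᵥ P s *ᵥ ψ).re ^ 2 = 2 ^ n := by
    apply ofReal_injective
    push_cast
    simp only [expectation_real]
    rw [(isTightFrame_P n).sum_star_dotProduct_mulVec_self_sq isHermitian_P, hψ, one_pow, mul_one]
  rw [← Finset.mul_sum, sum_sq, inv_mul_cancel₀ (by positivity)]
end

section
/- The ancilla marginal of the purified state has entries given by powers of Pauli overlaps: for every natural number n, every integer α ≥ 1, every unit vector ψ : (Fin n → Fin 2) → ℂ, and all i, j : Fin n → Fin 4, Σ over all f : Fin α → Fin n → Fin 2 of ψ'_α (i, f) · conj(ψ'_α (j, f)) = d⁻² · (⟨ψ, (P_j * P_i) ψ⟩)^α, where ⟨ψ, M ψ⟩ = star ψ ⬝ᵥ M.mulVec ψ and d = 2^n. -/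
open Complex Matrix BigOperators

/-- The purified state `ψ′_α = d⁻¹ ∑_t |t⟩ ⊗ (P_t ψ)^⊗α`. -/
noncomputable def psi' (n α : ℕ) (ψ : (Fin n → Fin 2) → ℂ) :
    (Fin n → Fin 4) × (Fin α → Fin n → Fin 2) → ℂ :=
  fun p => (2 ^ n : ℂ)⁻¹ * ∏ m, (P p.1).mulVec ψ (p.2 m)

/-!
The components of `ψ′_α` along `|t⟩` form `d⁻¹` times the product vector `(P_t ψ)^⊗α`. The dot
product of two product vectors is the product of the dot products of their factors, so the entry of
the marginal is `d⁻²` times the `α`-th power of `⟨P_j ψ, P_i ψ⟩`, which equals `⟨ψ, P_j P_i ψ⟩`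
because `P_j` is Hermitian.
-/

section ProductVector

variable {ι R : Type*} {κ : ι → Type*} [Fintype ι]

/-- The product vector `⨂ i, v i` in coordinates: multi-indices `f : ∀ i, κ i` label the product
basis. -/
def productVector [CommMonoid R] (v : ∀ i, κ i → R) : (∀ i, κ i) → R :=
  fun f => ∏ i, v i (f i)

theorem star_productVector [CommMonoid R] [StarMul R] (v : ∀ i, κ i → R) :
    star (productVector v) = productVector fun i => star (v i) :=
  funext fun _ => star_prod _ _

theorem productVector_dotProduct_productVector [CommSemiring R] [DecidableEq ι]
    [∀ i, Fintype (κ i)] (v w : ∀ i, κ i → R) :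
    productVector v ⬝ᵥ productVector w = ∏ i, v i ⬝ᵥ w i := by
  simp only [dotProduct, productVector, Fintype.prod_sum, Finset.prod_mul_distrib]

end ProductVector

section Hermitian

variable {R : Type*}

theorem isHermitian_of_prod {ι : Type*} {κ : ι → Type*} [Fintype ι] [CommMonoid R] [StarMul R]
    {A : ∀ k, Matrix (κ k) (κ k) R} (hA : ∀ k, (A k).IsHermitian) :
    (Matrix.of fun i j : ∀ k, κ k => ∏ k, A k (i k) (j k)).IsHermitian :=
  Matrix.IsHermitian.ext fun i j => by
    simp only [Matrix.of_apply, star_prod, (hA _).apply]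

theorem star_dotProduct_mul_mulVec {l m n : Type*} [Fintype l] [Fintype m] [Fintype n]
    [NonUnitalSemiring R] [StarRing R]
    (A : Matrix m l R) (B : Matrix m n R) (v : l → R) (w : n → R) :
    star v ⬝ᵥ (Aᴴ * B) *ᵥ w = star (A *ᵥ v) ⬝ᵥ B *ᵥ w := by
  rw [← mulVec_mulVec, dotProduct_mulVec, star_mulVec]

end Hermitian

theorem psi'_eq_smul_productVector (n α : ℕ) (ψ : (Fin n → Fin 2) → ℂ) (t : Fin n → Fin 4) :
    (fun f => psi' n α ψ (t, f)) = (2 ^ n : ℂ)⁻¹ • productVector fun _ => P t *ᵥ ψ :=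
  rfl

theorem ancilla_marginal_entries_general (n α : ℕ) (ψ : (Fin n → Fin 2) → ℂ)
    (i j : Fin n → Fin 4) :
    ∑ f : Fin α → Fin n → Fin 2, psi' n α ψ (i, f) * (starRingEnd ℂ) (psi' n α ψ (j, f))
      = ((2 ^ n : ℂ) ^ 2)⁻¹ * (star ψ ⬝ᵥ (P j * P i).mulVec ψ) ^ α := by
  have overlap : P i *ᵥ ψ ⬝ᵥ star (P j *ᵥ ψ) = star ψ ⬝ᵥ (P j * P i) *ᵥ ψ := by
    rw [dotProduct_comm, ← star_dotProduct_mul_mulVec, (isHermitian_P j).eq]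
  calc
    _ = (fun f => psi' n α ψ (i, f)) ⬝ᵥ star (fun f => psi' n α ψ (j, f)) := rfl
    _ = (2 ^ n : ℂ)⁻¹ * ((2 ^ n : ℂ)⁻¹ * (P i *ᵥ ψ ⬝ᵥ star (P j *ᵥ ψ)) ^ α) := by
      simp [psi'_eq_smul_productVector, star_smul, star_productVector,
        productVector_dotProduct_productVector]
    _ = ((2 ^ n : ℂ) ^ 2)⁻¹ * (star ψ ⬝ᵥ (P j * P i) *ᵥ ψ) ^ α := by
      rw [overlap, ← mul_assoc, ← mul_inv, ← sq]

theorem ancilla_marginal_entries (n α : ℕ) (hα : 1 ≤ α) (ψ : (Fin n → Fin 2) → ℂ)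
    (hψ : star ψ ⬝ᵥ ψ = 1) (i j : Fin n → Fin 4) :
    ∑ f : Fin α → Fin n → Fin 2, psi' n α ψ (i, f) * (starRingEnd ℂ) (psi' n α ψ (j, f))
      = ((2 ^ n : ℂ) ^ 2)⁻¹ * (star ψ ⬝ᵥ (P j * P i).mulVec ψ) ^ α :=
  ancilla_marginal_entries_general n α ψ i j
end

section
/- The maximally mixed state is the unique state with purity d⁻¹: for every nonempty finite type B with cardinality d and every matrix ρ indexed by B with complex entries, if ρ is positive semidefinite, trace(ρ) = 1, and trace(ρ * ρ) = (d : ℂ)⁻¹, then ρ = (d : ℂ)⁻¹ • 1. -/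
/-!
Put `d = card n`. The squared Frobenius norm of `d • A - A.trace • 1` is
`d * (d * tr (Aᴴ * A) - star (tr A) * tr A)`, so equality in the Cauchy–Schwarz bound
`|tr A|² ≤ d * tr (Aᴴ * A)` forces `A` to be scalar. For a state `ρ`, purity `d⁻¹` is exactly this
equality. Multiplying through by `d` keeps the argument free of division.
-/

open Complex Matrix BigOperators
open scoped ComplexOrder

section

variable {n R : Type*} [Fintype n] [DecidableEq n] [CommRing R] [StarRing R]

theorem trace_conjTranspose_mul_self_card_smul_sub_trace_smul_one (A : Matrix n n R) :
    (((Fintype.card n : R) • A - A.trace • (1 : Matrix n n R))ᴴ *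
        ((Fintype.card n : R) • A - A.trace • (1 : Matrix n n R))).trace =
      Fintype.card n * (Fintype.card n * (Aᴴ * A).trace - star A.trace * A.trace) := by
  simp only [conjTranspose_sub, conjTranspose_smul, conjTranspose_one, star_natCast, sub_mul,
    mul_sub, Matrix.smul_mul, Matrix.mul_smul, Matrix.one_mul, Matrix.mul_one, trace_sub,
    trace_smul, trace_one, trace_conjTranspose, smul_eq_mul]
  ring

theorem maximally_mixed_unique_min_purity_general [PartialOrder R] [StarOrderedRing R]
    [NoZeroDivisors R] (A : Matrix n n R)
    (hA : Fintype.card n * (Aᴴ * A).trace = star A.trace * A.trace) :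
    (Fintype.card n : R) • A = A.trace • (1 : Matrix n n R) := by
  rw [← sub_eq_zero, ← trace_conjTranspose_mul_self_eq_zero_iff,
    trace_conjTranspose_mul_self_card_smul_sub_trace_smul_one, hA, sub_self, mul_zero]

end

theorem maximally_mixed_unique_min_purity (B : Type*) [Fintype B] [DecidableEq B] [Nonempty B]
    (ρ : Matrix B B ℂ) (hρ : ρ.PosSemidef) (h1 : ρ.trace = 1)
    (h2 : (ρ * ρ).trace = ((Fintype.card B : ℂ))⁻¹) :
    ρ = ((Fintype.card B : ℂ))⁻¹ • (1 : Matrix B B ℂ) := by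
  rw [eq_inv_smul_iff₀ (Nat.cast_ne_zero.mpr Fintype.card_ne_zero)]
  simpa only [h1, one_smul] using
    maximally_mixed_unique_min_purity_general ρ (by simp [hρ.isHermitian.eq, h1, h2])
end

section
/- Benchmark formula for equatorial qubit states: for every real number θ and every integer α ≥ 1, the single-qubit state ψ_θ : Fin 2 → ℂ with ψ_θ 0 = (Real.sqrt 2)⁻¹ and ψ_θ 1 = (Real.sqrt 2)⁻¹ · Complex.exp (Complex.I * θ) is a unit vector and satisfies A_α(ψ_θ) = (1 + (Real.cos θ)^(2α) + (Real.sin θ)^(2α)) / 2, where A_α is computed with n = 1 and d = 2. -/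
open Complex Matrix BigOperators

/-!
The state `ψ_θ` lies on the equator of the Bloch sphere. For the state with polar angle `ϑ` and
azimuth `φ`, the double-angle formulas show that the expectations of `X`, `Y`, `Z` are the Cartesian
coordinates `(sin ϑ cos φ, sin ϑ sin φ, cos ϑ)`. At `ϑ = π / 2` these are `(cos φ, sin φ, 0)`.
-/

/-- The expectation value `⟨ψ, Q i ψ⟩` of the Pauli matrix `Q i`. It is real because `Q i` is
Hermitian, so it is encoded by its real part. -/
noncomputable def pauliExpectation (i : Fin 4) (ψ : Fin 2 → ℂ) : ℝ :=
  (star ψ ⬝ᵥ (Q i).mulVec ψ).re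

/-- The single-qubit Pauli moment `A_α(ψ)` of order `2α`. -/
noncomputable def pauliMoment (α : ℕ) (ψ : Fin 2 → ℂ) : ℝ :=
  2⁻¹ * ∑ i : Fin 4, pauliExpectation i ψ ^ (2 * α)

/-- The qubit state with polar angle `ϑ` and azimuth `φ` on the Bloch sphere, with its global phase
chosen so that the first amplitude is real. -/
noncomputable def blochState (ϑ φ : ℝ) : Fin 2 → ℂ :=
  ![(Real.cos (ϑ / 2) : ℂ), (Real.sin (ϑ / 2) : ℂ) * Complex.exp (Complex.I * φ)]

section PauliExpectation

variable (ψ : Fin 2 → ℂ)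

theorem Q_zero_mulVec : (Q 0).mulVec ψ = ψ :=
  one_mulVec ψ

theorem Q_one_mulVec : (Q 1).mulVec ψ = ![ψ 1, ψ 0] := by
  ext i
  fin_cases i <;> simp [Q, mulVec, dotProduct, Fin.sum_univ_two]

theorem Q_two_mulVec : (Q 2).mulVec ψ = ![-Complex.I * ψ 1, Complex.I * ψ 0] := by
  ext i
  fin_cases i <;> simp [Q, mulVec, dotProduct, Fin.sum_univ_two]

theorem Q_three_mulVec : (Q 3).mulVec ψ = ![ψ 0, -ψ 1] := by
  ext i
  fin_cases i <;> simp [Q, mulVec, dotProduct, Fin.sum_univ_two]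

theorem pauliExpectation_zero : pauliExpectation 0 ψ = (star ψ ⬝ᵥ ψ).re := by
  rw [pauliExpectation, Q_zero_mulVec]

theorem pauliExpectation_one : pauliExpectation 1 ψ = (2 * (star (ψ 0) * ψ 1)).re := by
  have dotProduct_eq : star ψ ⬝ᵥ (Q 1).mulVec ψ = star (ψ 0) * ψ 1 + star (star (ψ 0) * ψ 1) := by
    rw [Q_one_mulVec, vec2_dotProduct]
    simp [mul_comm]
  rw [pauliExpectation, dotProduct_eq, add_re, RCLike.star_def, conj_re, two_mul, add_re]

theorem pauliExpectation_two : pauliExpectation 2 ψ = (2 * (star (ψ 0) * ψ 1)).im := by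
  have dotProduct_eq : star ψ ⬝ᵥ (Q 2).mulVec ψ =
      Complex.I * (star (star (ψ 0) * ψ 1) - star (ψ 0) * ψ 1) := by
    simp only [Q_two_mulVec, vec2_dotProduct, Pi.star_apply, cons_val_zero, cons_val_one,
      cons_val_fin_one, star_mul, star_star]
    ring
  rw [pauliExpectation, dotProduct_eq, I_mul_re, sub_im, RCLike.star_def, conj_im, two_mul, add_im]
  ring

theorem pauliExpectation_three : pauliExpectation 3 ψ = normSq (ψ 0) - normSq (ψ 1) := by
  have dotProduct_eq : star ψ ⬝ᵥ (Q 3).mulVec ψ = (normSq (ψ 0) - normSq (ψ 1) : ℝ) := by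
    rw [Q_three_mulVec, vec2_dotProduct]
    simp [normSq_eq_conj_mul_self, sub_eq_add_neg]
  rw [pauliExpectation, dotProduct_eq, ofReal_re]

end PauliExpectation

section BlochState

variable (ϑ φ : ℝ)

theorem normSq_blochState_zero : normSq (blochState ϑ φ 0) = Real.cos (ϑ / 2) ^ 2 := by
  simp only [blochState, cons_val_zero, normSq_ofReal, sq]

theorem normSq_blochState_one : normSq (blochState ϑ φ 1) = Real.sin (ϑ / 2) ^ 2 := by
  simp only [blochState, cons_val_one, cons_val_fin_one, map_mul, normSq_ofReal,
    normSq_eq_norm_sq (Complex.exp _), norm_exp_I_mul_ofReal, mul_one, sq]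

theorem star_blochState_dotProduct_self : star (blochState ϑ φ) ⬝ᵥ blochState ϑ φ = 1 := by
  simp only [dotProduct, Fin.sum_univ_two, Pi.star_apply, RCLike.star_def,
    ← normSq_eq_conj_mul_self, normSq_blochState_zero, normSq_blochState_one]
  exact_mod_cast Real.cos_sq_add_sin_sq (ϑ / 2)

theorem two_mul_star_blochState_zero_mul_one :
    2 * (star (blochState ϑ φ 0) * blochState ϑ φ 1) =
      (Real.sin ϑ : ℂ) * Complex.exp (φ * Complex.I) := by
  have sin_eq : Real.sin ϑ = 2 * Real.sin (ϑ / 2) * Real.cos (ϑ / 2) := by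
    rw [← Real.sin_two_mul, mul_div_cancel₀ ϑ two_ne_zero]
  simp only [blochState, cons_val_zero, cons_val_one, cons_val_fin_one, RCLike.star_def,
    conj_ofReal, sin_eq, ofReal_mul, ofReal_ofNat, mul_comm (φ : ℂ)]
  ring

theorem pauliExpectation_zero_blochState : pauliExpectation 0 (blochState ϑ φ) = 1 := by
  rw [pauliExpectation_zero, star_blochState_dotProduct_self, one_re]

theorem pauliExpectation_one_blochState :
    pauliExpectation 1 (blochState ϑ φ) = Real.sin ϑ * Real.cos φ := by
  rw [pauliExpectation_one, two_mul_star_blochState_zero_mul_one, re_ofReal_mul,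
    exp_ofReal_mul_I_re]

theorem pauliExpectation_two_blochState :
    pauliExpectation 2 (blochState ϑ φ) = Real.sin ϑ * Real.sin φ := by
  rw [pauliExpectation_two, two_mul_star_blochState_zero_mul_one, im_ofReal_mul,
    exp_ofReal_mul_I_im]

theorem pauliExpectation_three_blochState :
    pauliExpectation 3 (blochState ϑ φ) = Real.cos ϑ := by
  rw [pauliExpectation_three, normSq_blochState_zero, normSq_blochState_one, ← Real.cos_two_mul',
    mul_div_cancel₀ ϑ two_ne_zero]

theorem pauliMoment_blochState (α : ℕ) :
    pauliMoment α (blochState ϑ φ) =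
      (1 + (Real.sin ϑ * Real.cos φ) ^ (2 * α) + (Real.sin ϑ * Real.sin φ) ^ (2 * α) +
        Real.cos ϑ ^ (2 * α)) / 2 := by
  rw [pauliMoment, Fin.sum_univ_four, pauliExpectation_zero_blochState,
    pauliExpectation_one_blochState, pauliExpectation_two_blochState,
    pauliExpectation_three_blochState, one_pow, inv_mul_eq_div]

theorem blochState_pi_div_two :
    blochState (Real.pi / 2) φ =
      ![(((Real.sqrt 2)⁻¹ : ℝ) : ℂ),
        (((Real.sqrt 2)⁻¹ : ℝ) : ℂ) * Complex.exp (Complex.I * φ)] := by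
  have half_angle : Real.pi / 2 / 2 = Real.pi / 4 := by ring
  rw [blochState, half_angle, Real.cos_pi_div_four, Real.sin_pi_div_four, Real.sqrt_div_self]

theorem pauliMoment_blochState_pi_div_two {α : ℕ} (hα : α ≠ 0) :
    pauliMoment α (blochState (Real.pi / 2) φ) =
      (1 + Real.cos φ ^ (2 * α) + Real.sin φ ^ (2 * α)) / 2 := by
  rw [pauliMoment_blochState, Real.sin_pi_div_two, Real.cos_pi_div_two, one_mul, one_mul,
    zero_pow (mul_ne_zero two_ne_zero hα), add_zero]

end BlochState

theorem benchmark_equatorial_qubit (θ : ℝ) (α : ℕ) (hα : 1 ≤ α) :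
    (star (![(((Real.sqrt 2)⁻¹ : ℝ) : ℂ),
          (((Real.sqrt 2)⁻¹ : ℝ) : ℂ) * Complex.exp (Complex.I * θ)] : Fin 2 → ℂ) ⬝ᵥ
        ![(((Real.sqrt 2)⁻¹ : ℝ) : ℂ),
          (((Real.sqrt 2)⁻¹ : ℝ) : ℂ) * Complex.exp (Complex.I * θ)] = 1) ∧
      (2 : ℝ)⁻¹ * ∑ i : Fin 4,
          (star (![(((Real.sqrt 2)⁻¹ : ℝ) : ℂ),
              (((Real.sqrt 2)⁻¹ : ℝ) : ℂ) * Complex.exp (Complex.I * θ)] : Fin 2 → ℂ) ⬝ᵥ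
            (Q i).mulVec ![(((Real.sqrt 2)⁻¹ : ℝ) : ℂ),
              (((Real.sqrt 2)⁻¹ : ℝ) : ℂ) * Complex.exp (Complex.I * θ)]).re ^ (2 * α)
        = (1 + Real.cos θ ^ (2 * α) + Real.sin θ ^ (2 * α)) / 2 := by
  rw [← blochState_pi_div_two θ]
  exact ⟨star_blochState_dotProduct_self (Real.pi / 2) θ,
    pauliMoment_blochState_pi_div_two θ (Nat.one_le_iff_ne_zero.mp hα)⟩
end
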